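/- For every nonzero integer D, the set of 2×2 integer matrices with nonnegative entries and determinant D that are orphans is finite. -/

import Mathlib

/-!
Every entry of an orphan of determinant `D` is at most `|D|`. Indeed, if `c < a` and `b < d`, then
`b * c ≤ (d - 1) * (a - 1)`, so `D = a * d - b * c ≥ a + d - 1`, which bounds `a` and `d`, the
larger entries of their columns, by `D`. The other case is the same up to swapping the rows.
-/

/-- A nonnegative integer matrix with nonzero determinant is an orphan if
its rows are incomparable. -/
def IsOrphan (N : Matrix (Fin 2) (Fin 2) ℤ) : Prop :=
  (∀ i j, 0 ≤ N i j) ∧ N.det ≠ 0 ∧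
    ((N 0 0 < N 1 0 ∧ N 1 1 < N 0 1) ∨ (N 1 0 < N 0 0 ∧ N 0 1 < N 1 1))

theorem orphans_finite (D : ℤ) (hD : D ≠ 0) :
    {M : Matrix (Fin 2) (Fin 2) ℤ | M.det = D ∧ IsOrphan M}.Finite := by
  have hfin : {M : Matrix (Fin 2) (Fin 2) ℤ | ∀ i j, M i j ∈ Set.Icc 0 |D|}.Finite :=
    Set.Finite.pi' (t := fun _ : Fin 2 => {f : Fin 2 → ℤ | ∀ j, f j ∈ Set.Icc 0 |D|})
      fun _ => Set.Finite.pi' fun _ => Set.finite_Icc 0 |D|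
  refine hfin.subset ?_
  rintro M ⟨hdet, hnonneg, -, hinc⟩
  have key : M 0 0 ≤ |D| ∧ M 0 1 ≤ |D| ∧ M 1 0 ≤ |D| ∧ M 1 1 ≤ |D| := by
    rw [Matrix.det_fin_two] at hdet
    have ha := hnonneg 0 0
    have hb := hnonneg 0 1
    have hc := hnonneg 1 0
    have hd := hnonneg 1 1
    have hpos := le_abs_self D
    have hneg := neg_le_abs D
    rcases hinc with ⟨h1, h2⟩ | ⟨h1, h2⟩
    · have : M 0 0 * M 1 1 ≤ (M 1 0 - 1) * (M 0 1 - 1) :=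
        mul_le_mul (by omega) (by omega) hd (by omega)
      refine ⟨?_, ?_, ?_, ?_⟩ <;> linarith
    · have : M 1 0 * M 0 1 ≤ (M 0 0 - 1) * (M 1 1 - 1) :=
        mul_le_mul (by omega) (by omega) hb (by omega)
      refine ⟨?_, ?_, ?_, ?_⟩ <;> linarith
  obtain ⟨h00, h01, h10, h11⟩ := key
  intro i j
  refine ⟨hnonneg i j, ?_⟩
  fin_cases i <;> fin_cases j <;> assumption
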